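/- Under the assumptions π(x) ≤ C_π η(x) and g the modified soft-plus function, the map f ↦ L_k(f) = E_π[ (1/2) R_k(f)² − log ∂ₖ R_k(f) ], where R_k(f)(x) = f(x_{<k},0) + ∫_0^{x_k} g(∂ₖ f(x_{<k},t)) dt, is continuous from H^{1,k}(ℝ^k) (with norm ‖f‖² = ‖f‖²_{L²} + ‖∂ₖ f‖²_{L²}) to ℝ. -/

import Mathlib

open MeasureTheory Set

/-- The modified soft-plus function `g(ξ) = log(2^ξ + 1) / log 2`. -/
noncomputable def softg (ξ : ℝ) : ℝ := Real.log ((2 : ℝ) ^ ξ + 1) / Real.log 2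

/-- The standard Gaussian density on `ℝ^d`. -/
noncomputable def gaussDensity (d : ℕ) (x : Fin d → ℝ) : ℝ :=
  (2 * Real.pi) ^ (-(d : ℝ) / 2) * Real.exp (-(∑ i, x i ^ 2) / 2)

/-- The rectified map `R_k(f)(x) = f(x_{<k},0) + ∫_0^{x_k} g(∂ₖ f(x_{<k},t)) dt`,
where `f'` denotes the partial derivative of `f` in the last coordinate. -/
noncomputable def rectifiedMap (k : ℕ) (f f' : (Fin (k + 1) → ℝ) → ℝ)
    (x : Fin (k + 1) → ℝ) : ℝ :=
  f (Function.update x (Fin.last k) 0) +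
    ∫ t in (0 : ℝ)..(x (Fin.last k)), softg (f' (Function.update x (Fin.last k) t))

/-- The objective `L_k(f) = E_π[(1/2) R_k(f)² − log ∂ₖ R_k(f)]`, where
`∂ₖ R_k(f) = g(∂ₖ f)` and the expectation is with respect to the density `p`. -/
noncomputable def mapObjective (d k : ℕ) (hkd : k + 1 ≤ d)
    (p : (Fin d → ℝ) → ℝ) (f f' : (Fin (k + 1) → ℝ) → ℝ) : ℝ :=
  ∫ x : Fin d → ℝ,
    ((1 / 2) * rectifiedMap k f f' (fun i => x (Fin.castLE hkd i)) ^ 2 -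
      Real.log (softg (f' (fun i => x (Fin.castLE hkd i))))) * p x

/-!
On almost every line in the direction of the last coordinate, `R_k(f₁) − R_k(f₂)` at `x_k` is
`(f₁ − f₂)(0)` plus the integral of `g(∂ₖ f₁) − g(∂ₖ f₂)` over `[0, x_k]`. The one-dimensional trace
inequality `u(0)² ≤ 2‖u‖²_{H¹}`, the Lipschitz bound on `g` and Cauchy–Schwarz bound its square by
`(4 + 2|x_k|)` times the squared `H¹` norm of `f₁ − f₂` on that line. This weight is integrable for
the Gaussian in `x_k`, and in the other coordinates the Gaussian is dominated by Lebesgue measure;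
hence `R_k` is Lipschitz from `H^{1,k}` to `L²(π)`. So is `f ↦ log g(∂ₖ f)`, and `L_k` is a
quadratic function of the first map minus a linear function of the second.
-/

open ProbabilityTheory Filter Topology
open scoped ENNReal NNReal

section Softplus

lemma softg_pos (ξ : ℝ) : 0 < softg ξ :=
  div_pos (Real.log_pos (by linarith [Real.rpow_pos_of_pos two_pos ξ])) (Real.log_pos one_lt_two)

lemma hasDerivAt_softg (ξ : ℝ) : HasDerivAt softg ((2 : ℝ) ^ ξ / ((2 : ℝ) ^ ξ + 1)) ξ := by
  have hlog2 : Real.log 2 ≠ 0 := (Real.log_pos one_lt_two).ne'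
  have hexp : HasDerivAt (fun ξ : ℝ => (2 : ℝ) ^ ξ + 1) ((2 : ℝ) ^ ξ * Real.log 2) ξ :=
    (Real.hasStrictDerivAt_const_rpow two_pos ξ).hasDerivAt.add_const 1
  refine ((hexp.log (by positivity)).div_const (Real.log 2)).congr_deriv ?_
  field_simp

lemma lipschitzWith_softg : LipschitzWith 1 softg := by
  refine lipschitzWith_of_nnnorm_deriv_le (fun ξ => (hasDerivAt_softg ξ).differentiableAt)
    fun ξ => ?_
  rw [(hasDerivAt_softg ξ).deriv, ← NNReal.coe_le_coe, coe_nnnorm, NNReal.coe_one,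
    Real.norm_of_nonneg (by positivity), div_le_one (by positivity)]
  linarith

lemma lipschitzWith_log_softg : LipschitzWith 1 fun ξ => Real.log (softg ξ) := by
  have hderiv (ξ : ℝ) := (hasDerivAt_softg ξ).log (softg_pos ξ).ne'
  refine lipschitzWith_of_nnnorm_deriv_le (fun ξ => (hderiv ξ).differentiableAt) fun ξ => ?_
  have hpow : (0 : ℝ) < 2 ^ ξ := Real.rpow_pos_of_pos two_pos ξ
  have hlog2 : Real.log 2 ≤ 1 := Real.log_two_lt_d9.le.trans (by norm_num)
  rw [(hderiv ξ).deriv, ← NNReal.coe_le_coe, coe_nnnorm, NNReal.coe_one,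
    Real.norm_of_nonneg (div_nonneg (by positivity) (softg_pos ξ).le), div_le_one (softg_pos ξ)]
  calc (2 : ℝ) ^ ξ / (2 ^ ξ + 1) = 1 - ((2 : ℝ) ^ ξ + 1)⁻¹ := by field_simp; ring
    _ ≤ Real.log (2 ^ ξ + 1) := Real.one_sub_inv_le_log_of_pos (by positivity)
    _ ≤ Real.log (2 ^ ξ + 1) / Real.log 2 :=
      le_div_self (Real.log_nonneg (by linarith)) (Real.log_pos one_lt_two) hlog2

end Softplus

section SquareIntegrable

variable {α : Type*} [MeasurableSpace α] {μ m : Measure α}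

lemma abs_integral_mul_le_sqrt_mul_sqrt {u v : α → ℝ} (hu : MemLp u 2 μ) (hv : MemLp v 2 μ) :
    |∫ x, u x * v x ∂μ| ≤ √(∫ x, u x ^ 2 ∂μ) * √(∫ x, v x ^ 2 ∂μ) := by
  have holder := integral_mul_norm_le_Lp_mul_Lq (μ := μ) Real.HolderConjugate.two_two
    (by simpa using hu) (by simpa using hv)
  simp only [Real.rpow_two, Real.norm_eq_abs, sq_abs, ← Real.sqrt_eq_rpow] at holder
  calc |∫ x, u x * v x ∂μ| ≤ ∫ x, |u x * v x| ∂μ := abs_integral_le_integral_abs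
    _ = ∫ x, |u x| * |v x| ∂μ := by simp only [abs_mul]
    _ ≤ _ := holder

lemma abs_integral_le_sqrt_mul_sqrt [IsFiniteMeasure μ] {u : α → ℝ} (hu : MemLp u 2 μ) :
    |∫ x, u x ∂μ| ≤ √(μ.real univ) * √(∫ x, u x ^ 2 ∂μ) := by
  simpa using abs_integral_mul_le_sqrt_mul_sqrt (memLp_const (1 : ℝ)) hu

lemma abs_integral_half_sq_sub_le [IsFiniteMeasure μ] {r s v w : α → ℝ}
    (hr : MemLp r 2 μ) (hs : MemLp s 2 μ) (hv : MemLp v 2 μ) (hw : MemLp w 2 μ) :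
    |(∫ x, ((1 / 2) * r x ^ 2 - v x) ∂μ) - ∫ x, ((1 / 2) * s x ^ 2 - w x) ∂μ| ≤
      √(∫ x, (r x - s x) ^ 2 ∂μ) * (√(∫ x, r x ^ 2 ∂μ) + 1 / 2 * √(∫ x, (r x - s x) ^ 2 ∂μ)) +
        √(μ.real univ) * √(∫ x, (v x - w x) ^ 2 ∂μ) := by
  have hrs : MemLp (fun x => r x - s x) 2 μ := hr.sub hs
  have hvw : MemLp (fun x => v x - w x) 2 μ := hv.sub hw
  have hprod : Integrable (fun x => r x * (r x - s x)) μ := hr.integrable_mul hrs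
  have hexpand : (∫ x, ((1 / 2) * r x ^ 2 - v x) ∂μ) - ∫ x, ((1 / 2) * s x ^ 2 - w x) ∂μ =
      (∫ x, r x * (r x - s x) ∂μ) - 1 / 2 * (∫ x, (r x - s x) ^ 2 ∂μ) -
        ∫ x, (v x - w x) ∂μ := by
    rw [← integral_const_mul, ← integral_sub, ← integral_sub, ← integral_sub]
    · congr 1 with x
      ring
    · exact hprod.sub (hrs.integrable_sq.const_mul _)
    · exact hvw.integrable one_le_two
    · exact hprod
    · exact hrs.integrable_sq.const_mul _
    · exact (hr.integrable_sq.const_mul _).sub (hv.integrable one_le_two)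
    · exact (hs.integrable_sq.const_mul _).sub (hw.integrable one_le_two)
  have hcross := abs_le.1 (abs_integral_mul_le_sqrt_mul_sqrt hr hrs)
  have hlin := abs_le.1 (abs_integral_le_sqrt_mul_sqrt hvw)
  have hsq : √(∫ x, (r x - s x) ^ 2 ∂μ) ^ 2 = ∫ x, (r x - s x) ^ 2 ∂μ :=
    Real.sq_sqrt (integral_nonneg fun x => sq_nonneg _)
  rw [hexpand, abs_le]
  constructor <;> linarith [sq_nonneg √(∫ x, (r x - s x) ^ 2 ∂μ)]

lemma integral_le_of_measure_le_smul {C : ℝ≥0∞} (hC : C ≠ ∞) (hm : m ≤ C • μ) {f : α → ℝ}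
    (hf0 : 0 ≤ f) (hf : Integrable f μ) : ∫ x, f x ∂m ≤ C.toReal * ∫ x, f x ∂μ :=
  calc ∫ x, f x ∂m ≤ ∫ x, f x ∂(C • μ) :=
        integral_mono_measure hm (Eventually.of_forall hf0) (hf.smul_measure hC)
    _ = C.toReal * ∫ x, f x ∂μ := by rw [integral_smul_measure, smul_eq_mul]

lemma memLp_lipschitz_comp [IsFiniteMeasure μ] {p : ℝ≥0∞} {K : ℝ≥0} {g : ℝ → ℝ}
    (hg : LipschitzWith K g) {u : α → ℝ} (hu : MemLp u p μ) : MemLp (fun x => g (u x)) p μ := by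
  have hshift : LipschitzWith K fun ξ => g ξ - g 0 := fun x y => by simpa using hg x y
  have := (hshift.comp_memLp (sub_self _) hu).add (memLp_const (g 0))
  simpa [Function.comp_def, Pi.add_def] using this

lemma abs_lipschitz_sub_le {K : ℝ≥0} {g : ℝ → ℝ} (hg : LipschitzWith K g) (x y : ℝ) :
    |g x - g y| ≤ K * |x - y| := by
  simpa [Real.dist_eq] using hg.dist_le_mul x y

lemma memLp_lipschitz_comp_sub {p : ℝ≥0∞} {K : ℝ≥0} {g : ℝ → ℝ} (hg : LipschitzWith K g)
    {u v : α → ℝ} (hu : MemLp u p μ) (hv : MemLp v p μ) :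
    MemLp (fun x => g (u x) - g (v x)) p μ :=
  (hu.sub hv).of_le_mul ((hg.continuous.comp_aestronglyMeasurable hu.1).sub
    (hg.continuous.comp_aestronglyMeasurable hv.1))
    (Eventually.of_forall fun _ => abs_lipschitz_sub_le hg _ _)

lemma integral_sq_lipschitz_comp_sub_le {K : ℝ≥0} {g : ℝ → ℝ} (hg : LipschitzWith K g)
    {u v : α → ℝ} (hu : MemLp u 2 μ) (hv : MemLp v 2 μ) :
    ∫ x, (g (u x) - g (v x)) ^ 2 ∂μ ≤ K ^ 2 * ∫ x, (u x - v x) ^ 2 ∂μ := by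
  rw [← integral_const_mul]
  refine integral_mono (memLp_lipschitz_comp_sub hg hu hv).integrable_sq
    ((hu.sub hv).integrable_sq.const_mul _) fun x => ?_
  rw [← mul_pow, sq_le_sq, abs_mul, NNReal.abs_eq]
  exact abs_lipschitz_sub_le hg _ _

end SquareIntegrable

/-- The squared `H¹`-type norm `‖f‖²_{L²(μ)} + ‖f'‖²_{L²(μ)}` of a function `f` with derivative `f'`
in a distinguished direction; the derivative is passed as a separate function. -/
noncomputable def sobolevNormSq {α : Type*} [MeasurableSpace α] (μ : Measure α) (f f' : α → ℝ) :
    ℝ :=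
  (∫ x, f x ^ 2 ∂μ) + ∫ x, f' x ^ 2 ∂μ

lemma sobolevNormSq_nonneg {α : Type*} [MeasurableSpace α] (μ : Measure α) (f f' : α → ℝ) :
    0 ≤ sobolevNormSq μ f f' :=
  add_nonneg (integral_nonneg fun _ => sq_nonneg _) (integral_nonneg fun _ => sq_nonneg _)

/-- The function `s ↦ u(0) + ∫₀ˢ g(u'(t)) dt` of one real variable: the primitive of `g ∘ u'` that
agrees with `u` at `0`. -/
noncomputable def rectifyLine (g u u' : ℝ → ℝ) (s : ℝ) : ℝ :=
  u 0 + ∫ t in (0 : ℝ)..s, g (u' t)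

section Line

instance isFiniteMeasure_restrict_uIoc (a b : ℝ) :
    IsFiniteMeasure (volume.restrict (uIoc a b)) :=
  Real.isFiniteMeasure_restrict_Ioc _ _

lemma sq_intervalIntegral_le {w : ℝ → ℝ} (hw : MemLp w 2) (a b : ℝ) :
    (∫ t in a..b, w t) ^ 2 ≤ |b - a| * ∫ t, w t ^ 2 := by
  have cauchySchwarz := abs_integral_le_sqrt_mul_sqrt (hw.restrict (uIoc a b))
  rw [← intervalIntegral.abs_integral_eq_abs_integral_uIoc, ← Real.sqrt_mul measureReal_nonneg,
    Real.le_sqrt (abs_nonneg _) (by positivity), sq_abs, measureReal_restrict_apply_univ,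
    Measure.real, Real.volume_uIoc, ENNReal.toReal_ofReal (abs_nonneg _)] at cauchySchwarz
  refine cauchySchwarz.trans (mul_le_mul_of_nonneg_left ?_ (abs_nonneg _))
  exact setIntegral_le_integral hw.integrable_sq (Eventually.of_forall fun t => sq_nonneg (w t))

lemma intervalIntegrable_lipschitz_comp {K : ℝ≥0} {g : ℝ → ℝ} (hg : LipschitzWith K g)
    {w : ℝ → ℝ} (hw : MemLp w 2) (a b : ℝ) : IntervalIntegrable (fun t => g (w t)) volume a b :=
  intervalIntegrable_iff.2
    ((memLp_lipschitz_comp hg (hw.restrict (uIoc a b))).integrable one_le_two)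

lemma exists_sq_le_integral_sq {u : ℝ → ℝ} (hu : MemLp u 2) (x : ℝ) :
    ∃ t ∈ Ioc x (x + 1), u t ^ 2 ≤ ∫ s, u s ^ 2 := by
  obtain ⟨t, ht, hle⟩ := exists_le_setAverage (μ := volume) (s := Ioc x (x + 1))
    (by simp) (by simp) hu.integrable_sq.integrableOn
  refine ⟨t, ht, hle.trans ?_⟩
  rw [setAverage_eq, Real.volume_real_Ioc_of_le (by linarith), add_sub_cancel_left, inv_one,
    one_smul]
  exact setIntegral_le_integral hu.integrable_sq (Eventually.of_forall fun s => sq_nonneg _)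

lemma sq_le_two_mul_sobolevNormSq {u u' : ℝ → ℝ} (hderiv : ∀ t, HasDerivAt u (u' t) t)
    (hu : MemLp u 2) (hu' : MemLp u' 2) (x : ℝ) :
    u x ^ 2 ≤ 2 * sobolevNormSq volume u u' := by
  obtain ⟨t, ht, hut⟩ := exists_sq_le_integral_sq hu x
  have ftc : ∫ s in t..x, u' s = u x - u t :=
    intervalIntegral.integral_eq_sub_of_hasDerivAt (fun s _ => hderiv s)
      (intervalIntegrable_lipschitz_comp LipschitzWith.id hu' t x)
  have hdiff : (u x - u t) ^ 2 ≤ ∫ s, u' s ^ 2 :=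
    calc (u x - u t) ^ 2 ≤ |x - t| * ∫ s, u' s ^ 2 := ftc ▸ sq_intervalIntegral_le hu' t x
      _ ≤ 1 * ∫ s, u' s ^ 2 := by
        gcongr
        rw [abs_le]
        constructor <;> linarith [ht.1, ht.2]
      _ = ∫ s, u' s ^ 2 := one_mul _
  unfold sobolevNormSq
  linarith [sq_nonneg (u x - 2 * u t)]

lemma sq_rectifyLine_sub_le {K : ℝ≥0} {g : ℝ → ℝ} (hg : LipschitzWith K g) {u u' v v' : ℝ → ℝ}
    (hu : ∀ t, HasDerivAt u (u' t) t) (hv : ∀ t, HasDerivAt v (v' t) t)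
    (huL2 : MemLp u 2) (huL2' : MemLp u' 2) (hvL2 : MemLp v 2) (hvL2' : MemLp v' 2) (s : ℝ) :
    (rectifyLine g u u' s - rectifyLine g v v' s) ^ 2 ≤
      (4 + 2 * K ^ 2 * |s|) *
        sobolevNormSq volume (fun t => u t - v t) (fun t => u' t - v' t) := by
  have trace : (u 0 - v 0) ^ 2 ≤
      2 * sobolevNormSq volume (fun t => u t - v t) (fun t => u' t - v' t) :=
    sq_le_two_mul_sobolevNormSq (fun t => (hu t).sub (hv t)) (huL2.sub hvL2) (huL2'.sub hvL2') 0
  have hsplit : rectifyLine g u u' s - rectifyLine g v v' s =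
      (u 0 - v 0) + ∫ t in (0 : ℝ)..s, (g (u' t) - g (v' t)) := by
    rw [intervalIntegral.integral_sub (intervalIntegrable_lipschitz_comp hg huL2' 0 s)
      (intervalIntegrable_lipschitz_comp hg hvL2' 0 s), rectifyLine, rectifyLine]
    ring
  have primitive : (∫ t in (0 : ℝ)..s, (g (u' t) - g (v' t))) ^ 2 ≤ |s| *
      (K ^ 2 * sobolevNormSq volume (fun t => u t - v t) (fun t => u' t - v' t)) :=
    calc (∫ t in (0 : ℝ)..s, (g (u' t) - g (v' t))) ^ 2
        ≤ |s| * ∫ t, (g (u' t) - g (v' t)) ^ 2 := by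
          simpa using sq_intervalIntegral_le (memLp_lipschitz_comp_sub hg huL2' hvL2') 0 s
      _ ≤ |s| * (K ^ 2 * ∫ t, (u' t - v' t) ^ 2) := by
          gcongr
          exact integral_sq_lipschitz_comp_sub_le hg huL2' hvL2'
      _ ≤ _ := by
          gcongr
          exact le_add_of_nonneg_left (integral_nonneg fun t => sq_nonneg _)
  rw [hsplit]
  linarith [add_sq_le (a := u 0 - v 0) (b := ∫ t in (0 : ℝ)..s, (g (u' t) - g (v' t)))]

end Line

section Slices

variable {X : Type*} [MeasurableSpace X]

/-- Rectification along the first coordinate of `ℝ × X`, slice by slice: `F'` stands for the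
derivative of `F` in that coordinate. -/
noncomputable def rectify (g : ℝ → ℝ) (F F' : ℝ × X → ℝ) (z : ℝ × X) : ℝ :=
  rectifyLine g (fun t => F (t, z.2)) (fun t => F' (t, z.2)) z.1

/-- The anisotropic Sobolev space of square integrable functions on `ℝ × X` with a square integrable
derivative in the first coordinate. Membership is recorded for the pair of `F` and its everywhere
defined derivative `F'`, both of them genuine functions rather than classes modulo null sets. -/
structure MemSliceSobolev (ν : Measure X) (F F' : ℝ × X → ℝ) : Prop where
  hasDerivAt : ∀ t x, HasDerivAt (fun s => F (s, x)) (F' (t, x)) t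
  measurable : Measurable F
  measurable_deriv : Measurable F'
  memLp : MemLp F 2 (volume.prod ν)
  memLp_deriv : MemLp F' 2 (volume.prod ν)

lemma memSliceSobolev_zero (ν : Measure X) : MemSliceSobolev ν 0 0 :=
  ⟨fun t _ => hasDerivAt_const t 0, measurable_zero, measurable_zero, .zero, .zero⟩

section Fubini

variable {α : Type*} [MeasurableSpace α] {μ : Measure α} {ν : Measure X} [SFinite μ] [SFinite ν]
  {F F' : α × X → ℝ}

lemma ae_memLp_slice (hF : MemLp F 2 (μ.prod ν)) : ∀ᵐ x ∂ν, MemLp (fun a => F (a, x)) 2 μ := by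
  filter_upwards [hF.1.prod_swap.prodMk_left, hF.integrable_sq.prod_left_ae] with x hmeas hint
  exact (memLp_two_iff_integrable_sq hmeas).2 hint

lemma integrable_sobolevNormSq_slice (hF : MemLp F 2 (μ.prod ν)) (hF' : MemLp F' 2 (μ.prod ν)) :
    Integrable (fun x => sobolevNormSq μ (fun a => F (a, x)) (fun a => F' (a, x))) ν :=
  hF.integrable_sq.integral_prod_right.add hF'.integrable_sq.integral_prod_right

lemma integral_sobolevNormSq_slice (hF : MemLp F 2 (μ.prod ν)) (hF' : MemLp F' 2 (μ.prod ν)) :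
    ∫ x, sobolevNormSq μ (fun a => F (a, x)) (fun a => F' (a, x)) ∂ν =
      sobolevNormSq (μ.prod ν) F F' := by
  rw [sobolevNormSq, integral_prod_symm _ hF.integrable_sq, integral_prod_symm _ hF'.integrable_sq,
    ← integral_add hF.integrable_sq.integral_prod_right hF'.integrable_sq.integral_prod_right]
  rfl

end Fubini

lemma measurable_rectify {g : ℝ → ℝ} (hg : Measurable g) {F F' : ℝ × X → ℝ} (hF : Measurable F)
    (hF' : Measurable F') : Measurable (rectify g F F') := by
  -- Rescaling to a fixed interval turns the primitive into an integral depending on a parameter.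
  have hrescale : rectify g F F' = fun z =>
      F (0, z.2) + z.1 * ∫ r in Ioc (0 : ℝ) 1, g (F' (z.1 * r, z.2)) := by
    ext z
    rw [← intervalIntegral.integral_of_le zero_le_one, ← smul_eq_mul,
      intervalIntegral.smul_integral_comp_mul_left (fun t => g (F' (t, z.2))), mul_zero, mul_one]
    rfl
  have hintegral : Measurable fun z : ℝ × X => ∫ r in Ioc (0 : ℝ) 1, g (F' (z.1 * r, z.2)) := by
    refine (StronglyMeasurable.integral_prod_right'
      (f := fun q : (ℝ × X) × ℝ => g (F' (q.1.1 * q.2, q.1.2))) ?_).measurable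
    exact Measurable.stronglyMeasurable (by fun_prop)
  rw [hrescale]
  fun_prop

variable {γ : Measure ℝ} {ν : Measure X} {m : Measure (ℝ × X)} {C : ℝ≥0∞} {K : ℝ≥0}
  {g : ℝ → ℝ} {F F' G G' : ℝ × X → ℝ}

lemma integral_sq_lipschitz_comp_deriv_sub_le {h : ℝ → ℝ} (hh : LipschitzWith K h) (hC : C ≠ ∞)
    (hm : m ≤ C • volume.prod ν) (hF : MemSliceSobolev ν F F') (hG : MemSliceSobolev ν G G') :
    ∫ z, (h (F' z) - h (G' z)) ^ 2 ∂m ≤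
      (K ^ 2 * C.toReal) * sobolevNormSq (volume.prod ν) (F - G) (F' - G') :=
  calc ∫ z, (h (F' z) - h (G' z)) ^ 2 ∂m
      ≤ K ^ 2 * ∫ z, (F' z - G' z) ^ 2 ∂m :=
        integral_sq_lipschitz_comp_sub_le hh (hF.memLp_deriv.of_measure_le_smul hC hm)
          (hG.memLp_deriv.of_measure_le_smul hC hm)
    _ ≤ K ^ 2 * (C.toReal * ∫ z, (F' z - G' z) ^ 2 ∂volume.prod ν) := by
        gcongr
        exact integral_le_of_measure_le_smul hC hm (fun z => sq_nonneg _)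
          (hF.memLp_deriv.sub hG.memLp_deriv).integrable_sq
    _ ≤ _ := by
        rw [mul_assoc]
        gcongr
        exact le_add_of_nonneg_left (integral_nonneg fun z => sq_nonneg _)

variable [SFinite ν]

lemma ae_sq_rectify_sub_le (hg : LipschitzWith K g) (hF : MemSliceSobolev ν F F')
    (hG : MemSliceSobolev ν G G') :
    ∀ᵐ z ∂γ.prod ν, (rectify g F F' z - rectify g G G' z) ^ 2 ≤ (4 + 2 * K ^ 2 * |z.1|) *
      sobolevNormSq volume (fun t => F (t, z.2) - G (t, z.2))
        (fun t => F' (t, z.2) - G' (t, z.2)) := by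
  have hsnd : Measure.QuasiMeasurePreserving Prod.snd (γ.prod ν) ν :=
    Measure.quasiMeasurePreserving_snd
  filter_upwards [hsnd.ae (ae_memLp_slice hF.memLp), hsnd.ae (ae_memLp_slice hF.memLp_deriv),
    hsnd.ae (ae_memLp_slice hG.memLp), hsnd.ae (ae_memLp_slice hG.memLp_deriv)]
    with z hFz hFz' hGz hGz'
  exact sq_rectifyLine_sub_le hg (hF.hasDerivAt · z.2) (hG.hasDerivAt · z.2) hFz hFz' hGz hGz' z.1

variable [IsFiniteMeasure γ]

lemma integrable_trace_weight (hγ : Integrable (fun t => t) γ) :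
    Integrable (fun t => 4 + 2 * (K : ℝ) ^ 2 * |t|) γ :=
  (integrable_const _).add (hγ.abs.const_mul _)

lemma memLp_rectify_sub (hg : LipschitzWith K g) (hγ : Integrable (fun t => t) γ)
    (hF : MemSliceSobolev ν F F') (hG : MemSliceSobolev ν G G') :
    MemLp (fun z => rectify g F F' z - rectify g G G' z) 2 (γ.prod ν) := by
  have hmeas : Measurable fun z => rectify g F F' z - rectify g G G' z :=
    (measurable_rectify hg.continuous.measurable hF.measurable hF.measurable_deriv).sub
      (measurable_rectify hg.continuous.measurable hG.measurable hG.measurable_deriv)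
  refine (memLp_two_iff_integrable_sq hmeas.aestronglyMeasurable).2 ?_
  refine ((integrable_trace_weight (K := K) hγ).mul_prod (integrable_sobolevNormSq_slice
    (hF.memLp.sub hG.memLp) (hF.memLp_deriv.sub hG.memLp_deriv))).mono'
    (hmeas.pow_const 2).aestronglyMeasurable ?_
  filter_upwards [ae_sq_rectify_sub_le hg hF hG] with z hz
  simpa using hz

lemma integral_sq_rectify_sub_le (hg : LipschitzWith K g) (hγ : Integrable (fun t => t) γ)
    (hF : MemSliceSobolev ν F F') (hG : MemSliceSobolev ν G G') :
    ∫ z, (rectify g F F' z - rectify g G G' z) ^ 2 ∂γ.prod ν ≤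
      (∫ t, (4 + 2 * K ^ 2 * |t|) ∂γ) * sobolevNormSq (volume.prod ν) (F - G) (F' - G') := by
  have hweight := integrable_trace_weight (K := K) hγ
  have hslice := integrable_sobolevNormSq_slice (hF.memLp.sub hG.memLp)
    (hF.memLp_deriv.sub hG.memLp_deriv)
  rw [← integral_sobolevNormSq_slice (hF.memLp.sub hG.memLp) (hF.memLp_deriv.sub hG.memLp_deriv),
    ← integral_prod_mul]
  exact integral_mono_ae (memLp_rectify_sub hg hγ hF hG).integrable_sq (hweight.mul_prod hslice)
    (ae_sq_rectify_sub_le hg hF hG)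

lemma integral_sq_rectify_sub_le_of_le_smul (hg : LipschitzWith K g)
    (hγ : Integrable (fun t => t) γ) (hC : C ≠ ∞) (hm : m ≤ C • γ.prod ν)
    (hF : MemSliceSobolev ν F F') (hG : MemSliceSobolev ν G G') :
    ∫ z, (rectify g F F' z - rectify g G G' z) ^ 2 ∂m ≤
      (C.toReal * ∫ t, (4 + 2 * K ^ 2 * |t|) ∂γ) *
        sobolevNormSq (volume.prod ν) (F - G) (F' - G') := by
  rw [mul_assoc]
  refine (integral_le_of_measure_le_smul hC hm (fun z => sq_nonneg _)
    (memLp_rectify_sub hg hγ hF hG).integrable_sq).trans ?_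
  gcongr
  exact integral_sq_rectify_sub_le hg hγ hF hG

lemma memLp_rectify (hg : LipschitzWith K g) (hγ : Integrable (fun t => t) γ) (hC : C ≠ ∞)
    (hm : m ≤ C • γ.prod ν) (hfst : MemLp Prod.fst 2 m) (hF : MemSliceSobolev ν F F') :
    MemLp (rectify g F F') 2 m := by
  have hzero : rectify g (0 : ℝ × X → ℝ) 0 = fun z => g 0 * z.1 := by
    ext z
    simp [rectify, rectifyLine, mul_comm]
  have hdiff : MemLp (rectify g F F' - rectify g 0 0) 2 m :=
    (memLp_rectify_sub hg hγ hF (memSliceSobolev_zero ν)).of_measure_le_smul hC hm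
  exact sub_add_cancel (rectify g F F') _ ▸ hdiff.add (hzero ▸ hfst.const_mul (g 0))

/-- The objective `∫ (R(F)²/2 − log ∂R(F)) dm` of the rectification `R(F)` of `F`, whose derivative
along the first coordinate is `∂R(F) = g ∘ F'`. -/
noncomputable def sliceObjective (g : ℝ → ℝ) (m : Measure (ℝ × X)) (F F' : ℝ × X → ℝ) : ℝ :=
  ∫ z, ((1 / 2) * rectify g F F' z ^ 2 - Real.log (g (F' z))) ∂m

theorem exists_abs_sliceObjective_sub_lt [IsFiniteMeasure m] {L : ℝ≥0} (hg : LipschitzWith K g)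
    (hlog : LipschitzWith L fun ξ => Real.log (g ξ)) (hγ : Integrable (fun t => t) γ) (hC : C ≠ ∞)
    (hm : m ≤ C • γ.prod ν) (hm' : m ≤ C • volume.prod ν) (hfst : MemLp Prod.fst 2 m)
    (hF : MemSliceSobolev ν F F') {ε : ℝ} (hε : 0 < ε) :
    ∃ δ > 0, ∀ G G', MemSliceSobolev ν G G' →
      sobolevNormSq (volume.prod ν) (F - G) (F' - G') < δ →
        |sliceObjective g m F F' - sliceObjective g m G G'| < ε := by
  set A := C.toReal * ∫ t, (4 + 2 * K ^ 2 * |t|) ∂γ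
  set B := L ^ 2 * C.toReal
  have hmodulus : Tendsto (fun N => √(A * N) * (√(∫ z, rectify g F F' z ^ 2 ∂m) +
      1 / 2 * √(A * N)) + √(m.real univ) * √(B * N)) (𝓝 0) (𝓝 0) :=
    Continuous.tendsto' (by fun_prop) 0 0 (by simp)
  obtain ⟨δ, hδ, hsmall⟩ := Metric.eventually_nhds_iff.1 (hmodulus.eventually_lt_const hε)
  refine ⟨δ, hδ, fun G G' hG hN => ?_⟩
  set N := sobolevNormSq (volume.prod ν) (F - G) (F' - G')
  calc |sliceObjective g m F F' - sliceObjective g m G G'|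
      ≤ √(∫ z, (rectify g F F' z - rectify g G G' z) ^ 2 ∂m) *
          (√(∫ z, rectify g F F' z ^ 2 ∂m) +
            1 / 2 * √(∫ z, (rectify g F F' z - rectify g G G' z) ^ 2 ∂m)) +
          √(m.real univ) * √(∫ z, (Real.log (g (F' z)) - Real.log (g (G' z))) ^ 2 ∂m) :=
        abs_integral_half_sq_sub_le (memLp_rectify hg hγ hC hm hfst hF)
          (memLp_rectify hg hγ hC hm hfst hG)
          (memLp_lipschitz_comp hlog (hF.memLp_deriv.of_measure_le_smul hC hm'))
          (memLp_lipschitz_comp hlog (hG.memLp_deriv.of_measure_le_smul hC hm'))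
    _ ≤ √(A * N) * (√(∫ z, rectify g F F' z ^ 2 ∂m) + 1 / 2 * √(A * N)) +
          √(m.real univ) * √(B * N) := by
        have hmap := integral_sq_rectify_sub_le_of_le_smul hg hγ hC hm hF hG
        have hlogDeriv := integral_sq_lipschitz_comp_deriv_sub_le hlog hC hm' hF hG
        gcongr
    _ < ε := hsmall (by
        rwa [Real.dist_0_eq_abs, abs_of_nonneg (sobolevNormSq_nonneg _ _ _)])

end Slices

section Coordinates

variable {n : ℕ}

lemma sobolevNormSq_comp_measurableEquiv {α β : Type*} [MeasurableSpace α] [MeasurableSpace β]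
    {μ : Measure α} {ν : Measure β} {e : α ≃ᵐ β} (he : MeasurePreserving e μ ν) (f f' : β → ℝ) :
    sobolevNormSq μ (f ∘ e) (f' ∘ e) = sobolevNormSq ν f f' :=
  congrArg₂ (· + ·) (he.integral_comp' fun x => f x ^ 2) (he.integral_comp' fun x => f' x ^ 2)

/-- The coordinates on `ℝⁿ⁺¹` that put the `i`-th coordinate first, in front of the `n` others. -/
noncomputable def splitCoord (i : Fin (n + 1)) : (Fin (n + 1) → ℝ) ≃ᵐ ℝ × (Fin n → ℝ) :=
  MeasurableEquiv.piFinSuccAbove (fun _ => ℝ) i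

lemma measurePreserving_splitCoord (γ : Measure ℝ) [SigmaFinite γ] (i : Fin (n + 1)) :
    MeasurePreserving (splitCoord i) (Measure.pi fun _ => γ) (γ.prod (Measure.pi fun _ => γ)) :=
  measurePreserving_piFinSuccAbove (fun _ => γ) i

lemma splitCoord_symm_apply (i : Fin (n + 1)) (t : ℝ) (x : Fin (n + 1) → ℝ) :
    (splitCoord i).symm (t, (splitCoord i x).2) = Function.update x i t :=
  Fin.insertNth_removeNth (α := fun _ => ℝ) i t x

lemma update_splitCoord_symm (i : Fin (n + 1)) (s t : ℝ) (y : Fin n → ℝ) :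
    Function.update ((splitCoord i).symm (t, y)) i s = (splitCoord i).symm (s, y) := by
  rw [← splitCoord_symm_apply, MeasurableEquiv.apply_symm_apply]

lemma splitCoord_symm_apply_self (i : Fin (n + 1)) (z : ℝ × (Fin n → ℝ)) :
    (splitCoord i).symm z i = z.1 :=
  Fin.insertNth_apply_same (α := fun _ => ℝ) i z.1 z.2

lemma memSliceSobolev_comp_splitCoord_symm (i : Fin (n + 1)) {f f' : (Fin (n + 1) → ℝ) → ℝ}
    (hderiv : ∀ x, HasDerivAt (fun t => f (Function.update x i t)) (f' x) (x i))
    (hf : Measurable f) (hf' : Measurable f')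
    (hfL2 : Integrable fun x => f x ^ 2) (hf'L2 : Integrable fun x => f' x ^ 2) :
    MemSliceSobolev volume (f ∘ (splitCoord i).symm) (f' ∘ (splitCoord i).symm) where
  hasDerivAt t y := by
    simpa only [update_splitCoord_symm, splitCoord_symm_apply_self, Function.comp_apply] using
      hderiv ((splitCoord i).symm (t, y))
  measurable := hf.comp (splitCoord i).symm.measurable
  measurable_deriv := hf'.comp (splitCoord i).symm.measurable
  memLp := ((memLp_two_iff_integrable_sq hf.aestronglyMeasurable).2 hfL2).comp_measurePreserving
    (measurePreserving_splitCoord volume i).symm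
  memLp_deriv := ((memLp_two_iff_integrable_sq hf'.aestronglyMeasurable).2
    hf'L2).comp_measurePreserving (measurePreserving_splitCoord volume i).symm

lemma rectifiedMap_eq_rectify (f f' : (Fin (n + 1) → ℝ) → ℝ) (x : Fin (n + 1) → ℝ) :
    rectifiedMap n f f' x = rectify softg (f ∘ (splitCoord (Fin.last n)).symm)
      (f' ∘ (splitCoord (Fin.last n)).symm) (splitCoord (Fin.last n) x) := by
  simp only [rectify, rectifyLine, Function.comp_apply, splitCoord_symm_apply]
  rfl

/-- The law, for the measure on `ℝᵈ` with density `p`, of the first `k + 1` coordinates, with the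
last of them put first. -/
noncomputable def headLaw {d k : ℕ} (hkd : k + 1 ≤ d) (p : (Fin d → ℝ) → ℝ) :
    Measure (ℝ × (Fin k → ℝ)) :=
  (volume.withDensity fun x => ENNReal.ofReal (p x)).map
    fun x => splitCoord (Fin.last k) fun i => x (Fin.castLE hkd i)

lemma measurable_splitCoord_castLE {d k : ℕ} (hkd : k + 1 ≤ d) :
    Measurable fun x : Fin d → ℝ => splitCoord (Fin.last k) fun i => x (Fin.castLE hkd i) :=
  (splitCoord (Fin.last k)).measurable.comp (by fun_prop)

lemma mapObjective_eq_sliceObjective {d k : ℕ} (hkd : k + 1 ≤ d) {p : (Fin d → ℝ) → ℝ}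
    (hp : Measurable p) (hp0 : 0 ≤ p) {f f' : (Fin (k + 1) → ℝ) → ℝ} (hf : Measurable f)
    (hf' : Measurable f') :
    mapObjective d k hkd p f f' = sliceObjective softg (headLaw hkd p)
      (f ∘ (splitCoord (Fin.last k)).symm) (f' ∘ (splitCoord (Fin.last k)).symm) := by
  have hsoftg : Measurable softg := lipschitzWith_softg.continuous.measurable
  set F := f ∘ (splitCoord (Fin.last k)).symm with hF
  set F' := f' ∘ (splitCoord (Fin.last k)).symm with hF'
  have hFmeas : Measurable F := hf.comp (splitCoord (Fin.last k)).symm.measurable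
  have hF'meas : Measurable F' := hf'.comp (splitCoord (Fin.last k)).symm.measurable
  have hR : Measurable (rectify softg F F') := measurable_rectify hsoftg hFmeas hF'meas
  have hintegrand : Measurable fun z => (1 / 2) * rectify softg F F' z ^ 2 -
      Real.log (softg (F' z)) := by
    fun_prop
  rw [sliceObjective, headLaw, integral_map (measurable_splitCoord_castLE hkd).aemeasurable
    hintegrand.aestronglyMeasurable, integral_withDensity_eq_integral_toReal_smul
    hp.ennreal_ofReal (Eventually.of_forall fun _ => ENNReal.ofReal_lt_top)]
  refine integral_congr_ae (Eventually.of_forall fun x => ?_)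
  simp only [rectifiedMap_eq_rectify, hF, hF', Function.comp_apply,
    MeasurableEquiv.symm_apply_apply, ENNReal.toReal_ofReal (hp0 x), smul_eq_mul, mul_comm (p x)]

end Coordinates

section Gaussian

lemma pi_withDensity_ofReal {ι : Type*} [Fintype ι] {α : ι → Type*} [∀ i, MeasurableSpace (α i)]
    {μ : ∀ i, Measure (α i)} [∀ i, SigmaFinite (μ i)] {q : ∀ i, α i → ℝ} (hq0 : ∀ i, 0 ≤ q i)
    (hq : ∀ i, Integrable (q i) (μ i)) :
    (Measure.pi fun i => (μ i).withDensity fun t => ENNReal.ofReal (q i t)) =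
      (Measure.pi μ).withDensity fun x => ENNReal.ofReal (∏ i, q i (x i)) := by
  have (i : ι) : IsFiniteMeasure ((μ i).withDensity fun t => ENNReal.ofReal (q i t)) :=
    isFiniteMeasure_withDensity_ofReal (hq i).2
  refine Measure.pi_eq fun s hs => ?_
  have hprod : Integrable (fun x => ∏ i, q i (x i)) (Measure.pi fun i => (μ i).restrict (s i)) :=
    Integrable.fintype_prod_dep fun i => (hq i).restrict
  rw [withDensity_apply _ (MeasurableSet.univ_pi hs), Measure.restrict_pi_pi,
    ← ofReal_integral_eq_lintegral_ofReal hprod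
      (Eventually.of_forall fun x => Finset.prod_nonneg fun i _ => hq0 i (x i)),
    integral_fintype_prod_eq_prod, ENNReal.ofReal_prod_of_nonneg
      fun i _ => integral_nonneg (hq0 i)]
  refine Finset.prod_congr rfl fun i _ => ?_
  rw [withDensity_apply _ (hs i), ofReal_integral_eq_lintegral_ofReal (hq i).restrict
    (Eventually.of_forall (hq0 i))]

lemma withDensity_ofReal_le {α : Type*} [MeasurableSpace α] {μ : Measure α} {q : α → ℝ}
    (hq : ∀ x, q x ≤ 1) : μ.withDensity (fun x => ENNReal.ofReal (q x)) ≤ μ := by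
  calc μ.withDensity (fun x => ENNReal.ofReal (q x)) ≤ μ.withDensity 1 :=
        withDensity_mono (Eventually.of_forall fun x => ENNReal.ofReal_le_one.2 (hq x))
    _ = μ := withDensity_one

lemma map_precomp_pi {ι κ E : Type*} [Fintype ι] [Fintype κ] [MeasurableSpace E] (γ : Measure E)
    [IsProbabilityMeasure γ] {σ : κ → ι} (hσ : Function.Injective σ) :
    (Measure.pi fun _ : ι => γ).map (fun x j => x (σ j)) = Measure.pi fun _ : κ => γ := by
  have hindep : iIndepFun (fun j (x : ι → E) => x (σ j)) (Measure.pi fun _ : ι => γ) :=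
    (iIndepFun_pi (X := fun _ t => t) fun _ => aemeasurable_id).precomp hσ
  rw [(iIndepFun_iff_map_fun_eq_pi_map fun j => (measurable_pi_apply _).aemeasurable).1 hindep]
  congr with j : 1
  exact (measurePreserving_eval (fun _ : ι => γ) (σ j)).map_eq

lemma gaussianPDFReal_zero_one_le_one (t : ℝ) : gaussianPDFReal 0 1 t ≤ 1 := by
  rw [gaussianPDFReal, NNReal.coe_one, mul_one, mul_one, sub_zero]
  refine mul_le_one₀ (inv_le_one_of_one_le₀ ?_) (Real.exp_pos _).le ?_
  · exact Real.one_le_sqrt.2 (by linarith [Real.pi_gt_three])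
  · exact Real.exp_le_one_iff.2 (by linarith [sq_nonneg t])

lemma gaussianReal_zero_one_eq_withDensity :
    gaussianReal 0 1 = volume.withDensity fun t => ENNReal.ofReal (gaussianPDFReal 0 1 t) :=
  gaussianReal_of_var_ne_zero 0 one_ne_zero

lemma gaussDensity_eq_prod (d : ℕ) (x : Fin d → ℝ) :
    gaussDensity d x = ∏ i, gaussianPDFReal 0 1 (x i) := by
  have hconst : (2 * Real.pi) ^ (-(d : ℝ) / 2) = (√(2 * Real.pi))⁻¹ ^ d := by
    rw [Real.sqrt_eq_rpow, ← Real.rpow_neg (by positivity), ← Real.rpow_mul_natCast (by positivity)]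
    congr 1
    ring
  rw [gaussDensity, hconst]
  simp only [gaussianPDFReal, NNReal.coe_one, mul_one, sub_zero,
    Finset.prod_mul_distrib, Finset.prod_const, Finset.card_univ, Fintype.card_fin,
    ← Real.exp_sum, Finset.sum_div, neg_div, Finset.sum_neg_distrib]

lemma gaussDensity_nonneg (d : ℕ) (x : Fin d → ℝ) : 0 ≤ gaussDensity d x := by
  unfold gaussDensity
  positivity

lemma pi_gaussianReal_eq_withDensity (d : ℕ) :
    Measure.pi (fun _ : Fin d => gaussianReal 0 1) =
      volume.withDensity fun x => ENNReal.ofReal (gaussDensity d x) := by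
  simp only [gaussianReal_zero_one_eq_withDensity, gaussDensity_eq_prod]
  exact pi_withDensity_ofReal (fun _ => gaussianPDFReal_nonneg 0 1)
    fun _ => integrable_gaussianPDFReal 0 1

lemma gaussianReal_zero_one_le_volume : gaussianReal 0 1 ≤ volume :=
  gaussianReal_zero_one_eq_withDensity ▸ withDensity_ofReal_le gaussianPDFReal_zero_one_le_one

lemma pi_gaussianReal_le_volume (d : ℕ) :
    Measure.pi (fun _ : Fin d => gaussianReal 0 1) ≤ volume := by
  rw [pi_gaussianReal_eq_withDensity]
  refine withDensity_ofReal_le fun x => (gaussDensity_eq_prod d x).trans_le ?_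
  exact Finset.prod_le_one (fun i _ => gaussianPDFReal_nonneg 0 1 _)
    fun i _ => gaussianPDFReal_zero_one_le_one _

lemma withDensity_le_smul_pi_gaussianReal {d : ℕ} {C : ℝ} {p : (Fin d → ℝ) → ℝ}
    (hp : ∀ x, p x ≤ C * gaussDensity d x) :
    (volume.withDensity fun x => ENNReal.ofReal (p x)) ≤
      ENNReal.ofReal C • Measure.pi fun _ => gaussianReal 0 1 := by
  rw [pi_gaussianReal_eq_withDensity, ← withDensity_smul' _ _ ENNReal.ofReal_ne_top]
  refine withDensity_mono (Eventually.of_forall fun x => ?_)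
  rw [Pi.smul_apply, smul_eq_mul, ← ENNReal.ofReal_mul' (gaussDensity_nonneg d x)]
  exact ENNReal.ofReal_le_ofReal (hp x)

lemma headLaw_le_smul_gaussian {d k : ℕ} (hkd : k + 1 ≤ d) {C : ℝ} {p : (Fin d → ℝ) → ℝ}
    (hp : ∀ x, p x ≤ C * gaussDensity d x) :
    headLaw hkd p ≤ ENNReal.ofReal C •
      (gaussianReal 0 1).prod (Measure.pi fun _ : Fin k => gaussianReal 0 1) := by
  have hmap : (Measure.pi fun _ : Fin d => gaussianReal 0 1).map
      (fun x => splitCoord (Fin.last k) fun i => x (Fin.castLE hkd i)) =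
      (gaussianReal 0 1).prod (Measure.pi fun _ : Fin k => gaussianReal 0 1) := by
    rw [← (measurePreserving_splitCoord (gaussianReal 0 1) (Fin.last k)).map_eq,
      ← map_precomp_pi (gaussianReal 0 1) (Fin.castLE_injective hkd),
      Measure.map_map (splitCoord _).measurable (by fun_prop)]
    rfl
  rw [← hmap, ← Measure.map_smul]
  exact Measure.map_mono (withDensity_le_smul_pi_gaussianReal hp) (measurable_splitCoord_castLE hkd)

lemma headLaw_le_smul_gaussian_prod_volume {d k : ℕ} (hkd : k + 1 ≤ d) {C : ℝ}
    {p : (Fin d → ℝ) → ℝ} (hp : ∀ x, p x ≤ C * gaussDensity d x) :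
    headLaw hkd p ≤ ENNReal.ofReal C • (gaussianReal 0 1).prod volume :=
  (headLaw_le_smul_gaussian hkd hp).trans <| by
    gcongr
    exact pi_gaussianReal_le_volume k

lemma headLaw_le_smul_volume {d k : ℕ} (hkd : k + 1 ≤ d) {C : ℝ} {p : (Fin d → ℝ) → ℝ}
    (hp : ∀ x, p x ≤ C * gaussDensity d x) :
    headLaw hkd p ≤ ENNReal.ofReal C • volume.prod volume :=
  (headLaw_le_smul_gaussian_prod_volume hkd hp).trans <| by
    gcongr
    exact gaussianReal_zero_one_le_volume

lemma isFiniteMeasure_headLaw {d k : ℕ} (hkd : k + 1 ≤ d) {C : ℝ} {p : (Fin d → ℝ) → ℝ}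
    (hp : ∀ x, p x ≤ C * gaussDensity d x) : IsFiniteMeasure (headLaw hkd p) :=
  have := Measure.smul_finite ((gaussianReal 0 1).prod
    (Measure.pi fun _ : Fin k => gaussianReal 0 1)) (c := ENNReal.ofReal C) ENNReal.ofReal_ne_top
  isFiniteMeasure_of_le _ (headLaw_le_smul_gaussian hkd hp)

lemma memLp_fst_headLaw {d k : ℕ} (hkd : k + 1 ≤ d) {C : ℝ} {p : (Fin d → ℝ) → ℝ}
    (hp : ∀ x, p x ≤ C * gaussDensity d x) : MemLp Prod.fst 2 (headLaw hkd p) :=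
  ((memLp_id_gaussianReal 2).comp_fst _).of_measure_le_smul ENNReal.ofReal_ne_top
    (headLaw_le_smul_gaussian hkd hp)

end Gaussian

/-- Under `p ≤ C_π η` (with `η` the standard Gaussian density) and `g` the
modified soft-plus, the map `f ↦ L_k(f)` is continuous from `H^{1,k}(ℝ^{k+1})`
(with squared norm `‖f‖²_{L²} + ‖∂ₖ f‖²_{L²}`) to `ℝ`: at every admissible `f₁`,
for every `ε > 0` there is `δ > 0` such that any admissible `f₂` with
`‖f₁ − f₂‖²_{H^{1,k}} < δ` satisfies `|L_k(f₁) − L_k(f₂)| < ε`. -/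
theorem objective_continuous (d k : ℕ) (hkd : k + 1 ≤ d) (Cπ : ℝ)
    (p : (Fin d → ℝ) → ℝ) (hpmeas : Measurable p) (hp0 : ∀ x, 0 ≤ p x)
    (hp : ∀ x, p x ≤ Cπ * gaussDensity d x)
    (f₁ f₁' : (Fin (k + 1) → ℝ) → ℝ)
    (hf₁' : ∀ x : Fin (k + 1) → ℝ,
      HasDerivAt (fun t => f₁ (Function.update x (Fin.last k) t)) (f₁' x) (x (Fin.last k)))
    (hf₁meas : Measurable f₁) (hf₁'meas : Measurable f₁')
    (hf₁L2 : Integrable (fun x => f₁ x ^ 2)) (hf₁'L2 : Integrable (fun x => f₁' x ^ 2)) :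
    ∀ ε > (0 : ℝ), ∃ δ > (0 : ℝ),
      ∀ f₂ f₂' : (Fin (k + 1) → ℝ) → ℝ,
        (∀ x : Fin (k + 1) → ℝ, HasDerivAt (fun t => f₂ (Function.update x (Fin.last k) t))
          (f₂' x) (x (Fin.last k))) →
        Measurable f₂ → Measurable f₂' →
        Integrable (fun x => f₂ x ^ 2) → Integrable (fun x => f₂' x ^ 2) →
        (∫ x, (f₁ x - f₂ x) ^ 2) + (∫ x, (f₁' x - f₂' x) ^ 2) < δ →
        |mapObjective d k hkd p f₁ f₁' - mapObjective d k hkd p f₂ f₂'| < ε := by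
  intro ε hε
  have := isFiniteMeasure_headLaw hkd hp
  have hγ : Integrable (fun t => t) (gaussianReal 0 1) :=
    (memLp_id_gaussianReal 1).integrable le_rfl
  have hF₁ := memSliceSobolev_comp_splitCoord_symm (Fin.last k) hf₁' hf₁meas hf₁'meas hf₁L2 hf₁'L2
  obtain ⟨δ, hδ, hclose⟩ := exists_abs_sliceObjective_sub_lt lipschitzWith_softg
    lipschitzWith_log_softg hγ ENNReal.ofReal_ne_top (headLaw_le_smul_gaussian_prod_volume hkd hp)
    (headLaw_le_smul_volume hkd hp) (memLp_fst_headLaw hkd hp) hF₁ hε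
  refine ⟨δ, hδ, fun f₂ f₂' hf₂' hf₂meas hf₂'meas hf₂L2 hf₂'L2 hdist => ?_⟩
  rw [mapObjective_eq_sliceObjective hkd hpmeas hp0 hf₁meas hf₁'meas,
    mapObjective_eq_sliceObjective hkd hpmeas hp0 hf₂meas hf₂'meas]
  refine hclose _ _ (memSliceSobolev_comp_splitCoord_symm (Fin.last k) hf₂' hf₂meas hf₂'meas
    hf₂L2 hf₂'L2) ?_
  exact (sobolevNormSq_comp_measurableEquiv (measurePreserving_splitCoord volume (Fin.last k)).symm
    (f₁ - f₂) (f₁' - f₂')).trans_lt hdist
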